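/- Let g ≥ 3 be a real number and define F: ℝ → ℝ by F(x) = 2((16g − 18)x² + (24g − 25)x + 4(g − 1)) / ((4g + 3)x² + (6g + 5)x + (g + 1)). Set x₀ = (2(g − 3) + √(4g² + 21g − 39))/15. Then x₀ > 0 and F(x) ≤ F(x₀) for every x ≥ 0; that is, F attains its maximum on [0, ∞) at x₀. -/

import Mathlib

/-!
For `N = a x² + b x + c` and `D = a' x² + b' x + c'`, the cubic terms of the Wronskian
`W = N' D - N D'` cancel: `W = A x² + 2 B x + C` with `A = a b' - a' b`, `B = a c' - a' c` and
`C = b c' - b' c`. At a zero `y` of `W` the difference `N x * D y - N y * D x` equals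
`(x - y)² (A y + B)`, so the sign of `A y + B = W' y / 2` decides globally whether `N / D` is
largest or smallest at `y`. For half the limiting slope, `W = -15 x² + 4 (g - 3) x + (3 g - 5)`,
and at its larger root `A y + B = -√(4 g² + 21 g - 39)`.
-/

theorem quadratic_cross_sub_eq_of_wronskian_eq_zero {R : Type*} [CommRing R]
    {a b c a' b' c' y : R}
    (hy : (2 * a * y + b) * (a' * y ^ 2 + b' * y + c') =
      (a * y ^ 2 + b * y + c) * (2 * a' * y + b')) (x : R) :
    (a * x ^ 2 + b * x + c) * (a' * y ^ 2 + b' * y + c') -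
        (a * y ^ 2 + b * y + c) * (a' * x ^ 2 + b' * x + c') =
      (x - y) ^ 2 * ((a * b' - a' * b) * y + (a * c' - a' * c)) := by
  linear_combination (x - y) * hy

theorem quadratic_div_quadratic_le_of_wronskian_eq_zero {K : Type*} [Field K] [LinearOrder K]
    [IsStrictOrderedRing K] {a b c a' b' c' x y : K}
    (hDx : 0 < a' * x ^ 2 + b' * x + c') (hDy : 0 < a' * y ^ 2 + b' * y + c')
    (hy : (2 * a * y + b) * (a' * y ^ 2 + b' * y + c') =
      (a * y ^ 2 + b * y + c) * (2 * a' * y + b'))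
    (hderiv : (a * b' - a' * b) * y + (a * c' - a' * c) ≤ 0) :
    (a * x ^ 2 + b * x + c) / (a' * x ^ 2 + b' * x + c') ≤
      (a * y ^ 2 + b * y + c) / (a' * y ^ 2 + b' * y + c') := by
  rw [div_le_div_iff₀ hDx hDy, ← sub_nonpos, quadratic_cross_sub_eq_of_wronskian_eq_zero hy]
  exact mul_nonpos_of_nonneg_of_nonpos (sq_nonneg _) hderiv

/-- The limiting slope `L(g, h)` for odd genus `g`, with both arguments extended to the reals. -/
noncomputable def oddLimitSlope (g x : ℝ) : ℝ :=
  2 * ((16 * g - 18) * x ^ 2 + (24 * g - 25) * x + 4 * (g - 1)) /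
    ((4 * g + 3) * x ^ 2 + (6 * g + 5) * x + (g + 1))

/-- The paper's `h_max`, the critical point of `oddLimitSlope g` that maximizes it on `[0, ∞)`. -/
noncomputable def oddLimitSlopeArgmax (g : ℝ) : ℝ :=
  (2 * (g - 3) + √(4 * g ^ 2 + 21 * g - 39)) / 15

theorem sqrt_eq_oddLimitSlopeArgmax (g : ℝ) :
    √(4 * g ^ 2 + 21 * g - 39) = 15 * oddLimitSlopeArgmax g - 2 * (g - 3) := by
  unfold oddLimitSlopeArgmax
  ring

theorem oddLimitSlopeArgmax_quadratic_eq {g : ℝ} (hdisc : 0 ≤ 4 * g ^ 2 + 21 * g - 39) :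
    15 * oddLimitSlopeArgmax g ^ 2 = 4 * (g - 3) * oddLimitSlopeArgmax g + (3 * g - 5) := by
  have hsq := Real.sq_sqrt hdisc
  rw [sqrt_eq_oddLimitSlopeArgmax] at hsq
  linear_combination hsq / 15

theorem oddLimitSlopeArgmax_pos {g : ℝ} (hg : 5 / 3 < g) : 0 < oddLimitSlopeArgmax g := by
  have habs : |2 * (g - 3)| < √(4 * g ^ 2 + 21 * g - 39) :=
    Real.lt_sqrt_of_sq_lt (by rw [sq_abs]; linarith)
  have hneg : -(2 * (g - 3)) ≤ |2 * (g - 3)| := neg_le_abs _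
  exact div_pos (by linarith) (by norm_num)

theorem oddLimitSlope_denom_pos {g x : ℝ} (hg : 0 ≤ g) (hx : 0 ≤ x) :
    0 < (4 * g + 3) * x ^ 2 + (6 * g + 5) * x + (g + 1) := by
  positivity

theorem oddLimitSlope_le_argmax {g x : ℝ} (hdisc : 0 ≤ 4 * g ^ 2 + 21 * g - 39)
    (hDx : 0 < (4 * g + 3) * x ^ 2 + (6 * g + 5) * x + (g + 1))
    (hDmax : 0 < (4 * g + 3) * oddLimitSlopeArgmax g ^ 2 + (6 * g + 5) * oddLimitSlopeArgmax g +
      (g + 1)) :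
    oddLimitSlope g x ≤ oddLimitSlope g (oddLimitSlopeArgmax g) := by
  simp only [oddLimitSlope, mul_div_assoc]
  refine mul_le_mul_of_nonneg_left ?_ zero_le_two
  apply quadratic_div_quadratic_le_of_wronskian_eq_zero hDx hDmax
  · linear_combination -oddLimitSlopeArgmax_quadratic_eq hdisc
  · have hsqrt := Real.sqrt_nonneg (4 * g ^ 2 + 21 * g - 39)
    rw [sqrt_eq_oddLimitSlopeArgmax] at hsqrt
    linarith

/-- At the threshold `g = 5 / 3` the critical point reaches the boundary point `0`. -/
theorem limit_slope_max_odd_general {g : ℝ} (hg : 5 / 3 < g) :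
    0 < oddLimitSlopeArgmax g ∧
      IsMaxOn (oddLimitSlope g) (Set.Ici 0) (oddLimitSlopeArgmax g) := by
  have hg₀ : 0 ≤ g := by linarith
  have hpos := oddLimitSlopeArgmax_pos hg
  have hdisc : 0 ≤ 4 * g ^ 2 + 21 * g - 39 := by nlinarith only [hg, sq_nonneg (g - 3)]
  exact ⟨hpos, fun x hx ↦ oddLimitSlope_le_argmax hdisc (oddLimitSlope_denom_pos hg₀ hx)
    (oddLimitSlope_denom_pos hg₀ hpos.le)⟩

/-- For `g ≥ 3`, the limiting-slope function (odd-genus case) attains its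
maximum on `[0, ∞)` at `x₀ = (2(g − 3) + √(4g² + 21g − 39))/15`. -/
theorem limit_slope_max_odd (g : ℝ) (hg : 3 ≤ g)
    (F : ℝ → ℝ)
    (hF : ∀ x, F x = 2 * ((16 * g - 18) * x ^ 2 + (24 * g - 25) * x + 4 * (g - 1)) /
      ((4 * g + 3) * x ^ 2 + (6 * g + 5) * x + (g + 1)))
    (x₀ : ℝ) (hx₀ : x₀ = (2 * (g - 3) + Real.sqrt (4 * g ^ 2 + 21 * g - 39)) / 15) :
    0 < x₀ ∧ ∀ x, 0 ≤ x → F x ≤ F x₀ := by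
  obtain ⟨rfl, rfl⟩ : F = oddLimitSlope g ∧ x₀ = oddLimitSlopeArgmax g := ⟨funext hF, hx₀⟩
  exact limit_slope_max_odd_general (by linarith)
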